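/- arXiv:1609.06724 — 2 statements merged into one kernel-verified Lean document; each statement's English description precedes it below -/
import Mathlib

section
/- A 4×4 complex matrix V with Vᵀ = −V satisfies V * V = 0 if and only if either (a₁, a₂, a₃) = (0,0,0) and b₁² + b₂² + b₃² = 0, or (b₁, b₂, b₃) = (0,0,0) and a₁² + a₂² + a₃² = 0, where a₁ = V 0 1 + V 2 3, a₂ = V 0 2 − V 1 3, a₃ = V 0 3 + V 1 2 and b₁ = V 0 1 − V 2 3, b₂ = V 0 2 + V 1 3, b₃ = V 0 3 − V 1 2. -/
open Matrix

/-!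
Twice an antisymmetric matrix `V` is `S a + A b`, where the self-dual matrices `S a` and the
anti-self-dual matrices `A b` are two commuting copies of the imaginary quaternions acting on `R⁴`.
Hence `(S a + A b)² = 2 S a A b - (a ⬝ a + b ⬝ b)`, and as `S a A b` is traceless, the square is
zero only if `S a A b = 0` and `a ⬝ a + b ⬝ b = 0`. Since `A b` commutes with every `S c`, the
Clifford relation `S a S c + S c S a = -2 (a ⬝ c)` turns `S a A b = 0` into `2 (a ⬝ c) A b = 0` for
all `c`, so that `a = 0` or `b = 0`.
-/

section Chirality

variable {R : Type*} [CommRing R]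

/-- The antisymmetric `4 × 4` matrix that is self-dual (`V₀₁ = V₂₃`, `V₀₂ = -V₁₃`, `V₀₃ = V₁₂`) and
has the given entries `V₀₁`, `V₀₂`, `V₀₃`. -/
def selfDualMatrix : (Fin 3 → R) →ₗ[R] Matrix (Fin 4) (Fin 4) R where
  toFun a := !![    0,  a 0,  a 1,  a 2;
                 -a 0,    0,  a 2, -a 1;
                 -a 1, -a 2,    0,  a 0;
                 -a 2,  a 1, -a 0,    0]
  map_add' a c := by ext i j; fin_cases i <;> fin_cases j <;> simp [add_comm]
  map_smul' r a := by ext i j; fin_cases i <;> fin_cases j <;> simp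

/-- The antisymmetric `4 × 4` matrix that is anti-self-dual (`V₀₁ = -V₂₃`, `V₀₂ = V₁₃`,
`V₀₃ = -V₁₂`) and has the given entries `V₀₁`, `V₀₂`, `V₀₃`. -/
def antiSelfDualMatrix : (Fin 3 → R) →ₗ[R] Matrix (Fin 4) (Fin 4) R where
  toFun b := !![    0,  b 0,  b 1,  b 2;
                 -b 0,    0, -b 2,  b 1;
                 -b 1,  b 2,    0, -b 0;
                 -b 2, -b 1,  b 0,    0]
  map_add' b c := by ext i j; fin_cases i <;> fin_cases j <;> simp [add_comm]
  map_smul' r b := by ext i j; fin_cases i <;> fin_cases j <;> simp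

/-- The triple `a(V)` of self-dual coordinates of an antisymmetric matrix, without the customary
factor `1 / 2`. -/
def selfDualTriple (V : Matrix (Fin 4) (Fin 4) R) : Fin 3 → R :=
  ![V 0 1 + V 2 3, V 0 2 - V 1 3, V 0 3 + V 1 2]

/-- The triple `b(V)` of anti-self-dual coordinates of an antisymmetric matrix, without the
customary factor `1 / 2`. -/
def antiSelfDualTriple (V : Matrix (Fin 4) (Fin 4) R) : Fin 3 → R :=
  ![V 0 1 - V 2 3, V 0 2 + V 1 3, V 0 3 - V 1 2]

lemma two_smul_eq_selfDualMatrix_add_antiSelfDualMatrix {V : Matrix (Fin 4) (Fin 4) R}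
    (hV : Vᵀ = -V) :
    (2 : R) • V =
      selfDualMatrix (selfDualTriple V) + antiSelfDualMatrix (antiSelfDualTriple V) := by
  have hanti (i j : Fin 4) : V j i = -V i j := congrFun₂ hV i j
  ext i j
  fin_cases i <;> fin_cases j <;>
    simp [selfDualMatrix, antiSelfDualMatrix, selfDualTriple, antiSelfDualTriple] <;>
    grind

lemma selfDualMatrix_mul_selfDualMatrix (a c : Fin 3 → R) :
    selfDualMatrix a * selfDualMatrix c =
      selfDualMatrix (c ⨯₃ a) - (a ⬝ᵥ c) • (1 : Matrix (Fin 4) (Fin 4) R) := by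
  simp only [selfDualMatrix, LinearMap.coe_mk, AddHom.coe_mk, cross_apply, vec3_dotProduct]
  ext i j
  fin_cases i <;> fin_cases j <;> simp [mul_apply, Fin.sum_univ_four] <;> ring

lemma antiSelfDualMatrix_mul_antiSelfDualMatrix (b c : Fin 3 → R) :
    antiSelfDualMatrix b * antiSelfDualMatrix c =
      antiSelfDualMatrix (b ⨯₃ c) - (b ⬝ᵥ c) • (1 : Matrix (Fin 4) (Fin 4) R) := by
  simp only [antiSelfDualMatrix, LinearMap.coe_mk, AddHom.coe_mk, cross_apply, vec3_dotProduct]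
  ext i j
  fin_cases i <;> fin_cases j <;> simp [mul_apply, Fin.sum_univ_four] <;> ring

lemma commute_selfDualMatrix_antiSelfDualMatrix (a b : Fin 3 → R) :
    Commute (selfDualMatrix a) (antiSelfDualMatrix b) := by
  rw [commute_iff_eq]
  simp only [selfDualMatrix, antiSelfDualMatrix, LinearMap.coe_mk, AddHom.coe_mk]
  ext i j
  fin_cases i <;> fin_cases j <;> simp [mul_apply, Fin.sum_univ_four] <;> ring

lemma trace_selfDualMatrix_mul_antiSelfDualMatrix (a b : Fin 3 → R) :
    (selfDualMatrix a * antiSelfDualMatrix b).trace = 0 := by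
  simp [selfDualMatrix, antiSelfDualMatrix, trace, Fin.sum_univ_four]
  ring

lemma selfDualMatrix_anticommutator (a c : Fin 3 → R) :
    selfDualMatrix a * selfDualMatrix c + selfDualMatrix c * selfDualMatrix a =
      -(2 * (a ⬝ᵥ c)) • (1 : Matrix (Fin 4) (Fin 4) R) := by
  rw [selfDualMatrix_mul_selfDualMatrix, selfDualMatrix_mul_selfDualMatrix,
    ← cross_anticomm a c, map_neg, dotProduct_comm c a]
  module

lemma selfDualMatrix_add_antiSelfDualMatrix_mul_self (a b : Fin 3 → R) :
    (selfDualMatrix a + antiSelfDualMatrix b) * (selfDualMatrix a + antiSelfDualMatrix b) =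
      (2 : R) • (selfDualMatrix a * antiSelfDualMatrix b) -
        (a ⬝ᵥ a + b ⬝ᵥ b) • (1 : Matrix (Fin 4) (Fin 4) R) := by
  rw [add_mul, mul_add, mul_add, ← (commute_selfDualMatrix_antiSelfDualMatrix a b).eq,
    selfDualMatrix_mul_selfDualMatrix, antiSelfDualMatrix_mul_antiSelfDualMatrix,
    cross_self, cross_self, map_zero, map_zero]
  module

lemma antiSelfDualMatrix_injective :
    Function.Injective (antiSelfDualMatrix : (Fin 3 → R) →ₗ[R] Matrix (Fin 4) (Fin 4) R) := by
  intro b c h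
  ext i
  fin_cases i
  · exact congrFun₂ h 0 1
  · exact congrFun₂ h 0 2
  · exact congrFun₂ h 0 3

lemma two_mul_dotProduct_smul_antiSelfDualMatrix_eq_zero {a b : Fin 3 → R}
    (h : selfDualMatrix a * antiSelfDualMatrix b = 0) (c : Fin 3 → R) :
    (2 * (a ⬝ᵥ c)) • antiSelfDualMatrix b = 0 := by
  have hac : selfDualMatrix a * selfDualMatrix c * antiSelfDualMatrix b = 0 := by
    rw [mul_assoc, (commute_selfDualMatrix_antiSelfDualMatrix c b).eq, ← mul_assoc, h, zero_mul]
  have hca : selfDualMatrix c * selfDualMatrix a * antiSelfDualMatrix b = 0 := by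
    rw [mul_assoc, h, mul_zero]
  have hclifford := congrArg (· * antiSelfDualMatrix b) (selfDualMatrix_anticommutator a c)
  simpa [add_mul, hac, hca] using hclifford

variable [IsDomain R] [NeZero (2 : R)]

lemma selfDualMatrix_mul_antiSelfDualMatrix_eq_zero_iff {a b : Fin 3 → R} :
    selfDualMatrix a * antiSelfDualMatrix b = 0 ↔ a = 0 ∨ b = 0 := by
  refine ⟨fun h ↦ or_iff_not_imp_right.2 fun hb ↦ ?_, ?_⟩
  · have hA : antiSelfDualMatrix b ≠ 0 :=
      (map_ne_zero_iff _ antiSelfDualMatrix_injective).2 hb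
    refine dotProduct_eq_zero a fun c ↦ ?_
    simpa [hA, two_ne_zero] using two_mul_dotProduct_smul_antiSelfDualMatrix_eq_zero h c
  · rintro (rfl | rfl) <;> simp

lemma selfDualMatrix_add_antiSelfDualMatrix_mul_self_eq_zero_iff {a b : Fin 3 → R} :
    (selfDualMatrix a + antiSelfDualMatrix b) * (selfDualMatrix a + antiSelfDualMatrix b) = 0 ↔
      (a = 0 ∨ b = 0) ∧ a ⬝ᵥ a + b ⬝ᵥ b = 0 := by
  rw [selfDualMatrix_add_antiSelfDualMatrix_mul_self,
    ← selfDualMatrix_mul_antiSelfDualMatrix_eq_zero_iff]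
  refine ⟨fun h ↦ ?_, fun ⟨hprod, hnorm⟩ ↦ by simp [hprod, hnorm]⟩
  have hnorm : a ⬝ᵥ a + b ⬝ᵥ b = 0 := by
    have hfour : (4 : R) ≠ 0 := by
      simpa [show (4 : R) = 2 * 2 by norm_num] using two_ne_zero (α := R)
    simpa [trace_selfDualMatrix_mul_antiSelfDualMatrix, hfour] using congrArg trace h
  exact ⟨by simpa [hnorm, two_ne_zero] using h, hnorm⟩

theorem sq_zero_iff_two_cones_general {V : Matrix (Fin 4) (Fin 4) R} (hV : Vᵀ = -V) :
    V * V = 0 ↔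
      (selfDualTriple V = 0 ∧ antiSelfDualTriple V ⬝ᵥ antiSelfDualTriple V = 0) ∨
        (antiSelfDualTriple V = 0 ∧ selfDualTriple V ⬝ᵥ selfDualTriple V = 0) := by
  have hdouble : V * V = 0 ↔ ((2 : R) • V) * ((2 : R) • V) = 0 := by
    simp [two_ne_zero]
  rw [hdouble, two_smul_eq_selfDualMatrix_add_antiSelfDualMatrix hV,
    selfDualMatrix_add_antiSelfDualMatrix_mul_self_eq_zero_iff, or_and_right]
  refine or_congr (and_congr_right fun ha ↦ ?_) (and_congr_right fun hb ↦ ?_)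
  · simp [ha]
  · simp [hb]

end Chirality

/-- The Higgs branch of SU(2) with 2 flavours is the union of two cones: a 4×4 complex
antisymmetric matrix V satisfies V² = 0 iff either the self-dual triple a(V) vanishes and
the anti-self-dual triple b(V) is null, or b(V) vanishes and a(V) is null. -/
theorem sq_zero_iff_two_cones (V : Matrix (Fin 4) (Fin 4) ℂ) (h1 : Vᵀ = -V) :
    V * V = 0 ↔
      ((V 0 1 + V 2 3 = 0 ∧ V 0 2 - V 1 3 = 0 ∧ V 0 3 + V 1 2 = 0 ∧
          (V 0 1 - V 2 3) ^ 2 + (V 0 2 + V 1 3) ^ 2 + (V 0 3 - V 1 2) ^ 2 = 0) ∨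
       (V 0 1 - V 2 3 = 0 ∧ V 0 2 + V 1 3 = 0 ∧ V 0 3 - V 1 2 = 0 ∧
          (V 0 1 + V 2 3) ^ 2 + (V 0 2 - V 1 3) ^ 2 + (V 0 3 + V 1 2) ^ 2 = 0)) := by
  simpa [selfDualTriple, antiSelfDualTriple, vec3_dotProduct, vec3_eq, pow_two, add_assoc,
    and_assoc] using sq_zero_iff_two_cones_general h1
end

section
/- Let n ≥ 1 and suppose O₁ and O₂ are the two SO(4n, ℂ)-orbits (under M ↦ A * M * A⁻¹, A with Aᵀ A = 1 and det A = 1) whose disjoint union is {M ∈ ℂ^{4n×4n} : Mᵀ = −M, M * M = 0, rank M = 2n}. Then, taking closures in the standard topology on ℂ^{4n×4n}: (1) closure(O₁) ∪ closure(O₂) = {M : Mᵀ = −M, M * M = 0}, and (2) closure(O₁) ∩ closure(O₂) = {M : Mᵀ = −M, M * M = 0, rank M ≤ 2n − 2}. -/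
/-!
If `M` is skew with `M² = 0`, then its range is isotropic for the dot product, hence lies in a
Lagrangian subspace `L`. A basis of `L`, as the columns of `U`, and the dual basis of a
complementary Lagrangian, as the columns of `V`, give `M = U m Uᵀ` with `m = Vᵀ M V` skew and of the
same rank as `M`.

*Union.* Perturbing `m` to `m + t w` with `w` skew and invertible makes it invertible for all but
finitely many `t`, so the matrices of maximal rank are dense.

*A determinant criterion.* In the basis `(U, V)` an orthogonal `A` has blocks `a b c d` with `aᵀ c`
skew and `aᵀ d + cᵀ b = 1`, so a Schur complement gives `det A = 1` as soon as `a = Vᵀ A U` is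
invertible. Since `Vᵀ (A M Aᵀ) V = a m aᵀ`, this happens whenever the left-hand side is invertible,
an open condition on `A M Aᵀ` which holds near `M` when `M` has maximal rank. So such an `M` is not
in the closure of its conjugates by orthogonal matrices of determinant `-1`, and these conjugates
form the other orbit.

*Intersection.* Hence both closures meet only in matrices of smaller rank, and the rank of a skew
matrix is even. Conversely, if `M` has smaller rank, its kernel is too large to be isotropic and
contains `v` with `v ⬝ᵥ v ≠ 0`; the reflection in `v` fixes `M` and exchanges the two orbits.
-/

open Matrix

/-- The orbit of a matrix M₀ under conjugation M ↦ A M A⁻¹ by the complex special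
orthogonal group SO(N, ℂ) = {A : Aᵀ A = 1, det A = 1}. -/
def soOrbit {N : ℕ} (M₀ : Matrix (Fin N) (Fin N) ℂ) : Set (Matrix (Fin N) (Fin N) ℂ) :=
  {M | ∃ A : Matrix (Fin N) (Fin N) ℂ, Aᵀ * A = 1 ∧ A.det = 1 ∧ M = A * M₀ * A⁻¹}

open Module Topology

section IsotropicSubspaces

variable {K V : Type*} [Field K] [AddCommGroup V] [Module K V] {B : LinearMap.BilinForm K V}
  {L L₀ W : Submodule K V}

/-- The subspace `L` is totally isotropic for `B`: it is contained in its own orthogonal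
complement. -/
def IsIsotropic (B : LinearMap.BilinForm K V) (L : Submodule K V) : Prop :=
  ∀ x ∈ L, ∀ y ∈ L, B x y = 0

lemma isIsotropic_of_apply_self_eq_zero [NeZero (2 : K)] (hB : B.IsSymm)
    (h : ∀ x ∈ L, B x x = 0) : IsIsotropic B L := by
  intro x hx y hy
  have hxy : B (x + y) (x + y) = 0 := h _ (L.add_mem hx hy)
  simp only [map_add, LinearMap.add_apply, h x hx, h y hy, hB.eq y x] at hxy
  have : 2 * B x y = 0 := by linear_combination hxy
  exact (mul_eq_zero.1 this).resolve_left two_ne_zero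

lemma IsIsotropic.le_orthogonal (h : IsIsotropic B L) : L ≤ B.orthogonal L :=
  fun y hy x hx => h x hx y hy

lemma IsIsotropic.two_mul_finrank_le [FiniteDimensional K V] (hB : B.Nondegenerate)
    (h : IsIsotropic B L) : 2 * finrank K L ≤ finrank K V := by
  have hle := Submodule.finrank_mono h.le_orthogonal
  rw [LinearMap.BilinForm.finrank_orthogonal hB] at hle
  have := L.finrank_le
  omega

lemma IsIsotropic.sup_span_singleton (hB : B.IsSymm) (h : IsIsotropic B L) {v : V}
    (hv : v ∈ B.orthogonal L) (hvv : B v v = 0) : IsIsotropic B (L ⊔ K ∙ v) := by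
  have hLv : ∀ x ∈ L, B x v = 0 := hv
  have hvL : ∀ x ∈ L, B v x = 0 := fun x hx => (hB.eq v x).trans (hLv x hx)
  simp only [IsIsotropic, Submodule.mem_sup, Submodule.mem_span_singleton]
  rintro _ ⟨x, hx, _, ⟨s, rfl⟩, rfl⟩ _ ⟨y, hy, _, ⟨t, rfl⟩, rfl⟩
  simp [h x hx y hy, hLv x hx, hvL y hy, hvv]

lemma exists_ne_zero_apply_self_eq_zero [IsAlgClosed K] [NeZero (2 : K)]
    (hW : 2 ≤ finrank K W) : ∃ v ∈ W, v ≠ 0 ∧ B v v = 0 := by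
  have : Nontrivial W := Module.nontrivial_of_finrank_pos (R := K) (by omega)
  obtain ⟨v, hv⟩ := exists_ne (0 : W)
  obtain ⟨w, hvw⟩ := exists_linearIndependent_pair_of_one_lt_finrank (R := K) (by omega) hv
  rw [LinearIndependent.pair_iff] at hvw
  by_cases hw : B w w = 0
  · refine ⟨w, w.2, fun h0 => ?_, hw⟩
    simpa using hvw 0 1 (by simpa using h0)
  obtain ⟨s, hs⟩ := IsAlgClosed.exists_pow_nat_eq (discrim (B w w) (B v w + B w v) (B v v)) two_pos
  obtain ⟨t, ht⟩ := exists_quadratic_eq_zero hw ⟨s, by rw [← hs, sq]⟩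
  refine ⟨v + t • w, (v + t • w).2, fun h0 => ?_, ?_⟩
  · simpa using hvw 1 t (by rw [one_smul]; exact_mod_cast h0)
  · simp only [map_add, map_smul, LinearMap.add_apply, LinearMap.smul_apply, smul_eq_mul]
    linear_combination ht

/- A maximal isotropic `L` of smaller dimension would have codimension at least two in its
orthogonal complement, and a plane there complementary to `L` contains an isotropic line. -/
lemma IsIsotropic.exists_ge_finrank_eq_half [IsAlgClosed K] [NeZero (2 : K)]
    [FiniteDimensional K V] (hsymm : B.IsSymm) (hB : B.Nondegenerate) (h₀ : IsIsotropic B L₀) :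
    ∃ L, L₀ ≤ L ∧ IsIsotropic B L ∧ finrank K L = finrank K V / 2 := by
  obtain ⟨L, hL₀, hmax⟩ := exists_maximal_ge_of_wellFoundedGT (IsIsotropic B) L₀ h₀
  have hL : IsIsotropic B L := hmax.prop
  refine ⟨L, hL₀, hL, ?_⟩
  obtain ⟨W, hLW, hsup⟩ := IsModularLattice.exists_disjoint_and_sup_eq hL.le_orthogonal
  have hW : finrank K W < 2 := by
    by_contra! hW
    obtain ⟨v, hvW, hv0, hvv⟩ := exists_ne_zero_apply_self_eq_zero (B := B) hW
    have hvL : v ∈ L := by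
      have hv : v ∈ B.orthogonal L := hsup ▸ Submodule.mem_sup_right hvW
      exact hmax.le_of_ge (hL.sup_span_singleton hsymm hv hvv) le_sup_left
        (Submodule.mem_sup_right (Submodule.mem_span_singleton_self v))
    exact hv0 (Submodule.disjoint_def.1 hLW v hvL hvW)
  have hdim := Submodule.finrank_sup_add_finrank_inf_eq L W
  rw [hsup, hLW.eq_bot, finrank_bot, LinearMap.BilinForm.finrank_orthogonal hB] at hdim
  have := hL.two_mul_finrank_le hB
  omega

lemma even_finrank_of_skew [NeZero (2 : K)] [FiniteDimensional K V]
    (hskew : ∀ x y, B x y = -B y x) (hB : B.Nondegenerate) : Even (finrank K V) := by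
  let A := LinearMap.BilinForm.toMatrix (finBasis K V) B
  have hdet : A.det ≠ 0 := (LinearMap.BilinForm.nondegenerate_iff_det_ne_zero (finBasis K V)).1 hB
  have hA : Aᵀ = -A := by
    ext i j
    simpa [A, LinearMap.BilinForm.toMatrix_apply] using hskew _ _
  by_contra hodd
  have hneg : A.det = -A.det := by
    conv_lhs => rw [← det_transpose, hA, det_neg, Fintype.card_fin,
      (Nat.not_even_iff_odd.1 hodd).neg_one_pow, neg_one_mul]
  have : 2 * A.det = 0 := by linear_combination hneg
  exact (mul_ne_zero two_ne_zero hdet) this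

lemma even_finrank_range_of_skew [NeZero (2 : K)] [FiniteDimensional K V]
    (hskew : ∀ x y, B x y = -B y x) : Even (finrank K (LinearMap.range B)) := by
  obtain ⟨W, hW⟩ := (LinearMap.ker B).exists_isCompl
  have hrefl : (B.restrict W).IsRefl := fun x y hxy => by
    rw [B.restrict_apply, LinearMap.domRestrict_apply] at hxy ⊢
    rw [hskew, hxy, neg_zero]
  have hker : LinearMap.ker (B.restrict W) = ⊥ := by
    rw [LinearMap.BilinForm.ker_restrict_eq_of_codisjoint hW.symm.codisjoint,
      ← Submodule.disjoint_iff_comap_eq_bot]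
    · exact hW.symm.disjoint
    · intro x _ y hy
      rw [hskew, LinearMap.mem_ker.1 hy, LinearMap.zero_apply, neg_zero]
  have hBW : (B.restrict W).Nondegenerate :=
    LinearMap.IsRefl.nondegenerate_iff_separatingLeft hrefl |>.2
      (LinearMap.separatingLeft_iff_ker_eq_bot.2 hker)
  have hrank : finrank K W = finrank K (LinearMap.range B) := by
    have h₁ := Submodule.finrank_add_eq_of_isCompl hW
    have h₂ := B.finrank_range_add_finrank_ker
    omega
  exact hrank ▸ even_finrank_of_skew (fun x y => hskew x y) hBW

end IsotropicSubspaces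

section DotProduct

variable {K ι κ μ : Type*} [Field K] [Fintype ι]

lemma isSymm_dotProductBilin :
    LinearMap.BilinForm.IsSymm (dotProductBilin K K : LinearMap.BilinForm K (ι → K)) :=
  ⟨dotProduct_comm⟩

lemma nondegenerate_dotProductBilin :
    LinearMap.BilinForm.Nondegenerate (dotProductBilin K K : LinearMap.BilinForm K (ι → K)) :=
  ⟨dotProduct_eq_zero, fun y hy => dotProduct_eq_zero y fun x => dotProduct_comm y x ▸ hy x⟩

lemma IsIsotropic.transpose_mul_eq_zero {L : Submodule K (ι → K)}
    (h : IsIsotropic (dotProductBilin K K) L) {X : Matrix ι κ K} {Y : Matrix ι μ K}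
    (hX : ∀ j, X.col j ∈ L) (hY : ∀ j, Y.col j ∈ L) : Xᵀ * Y = 0 := by
  ext i j
  exact h _ (hX i) _ (hY j)

lemma isIsotropic_range_mulVecLin [Fintype κ] {M : Matrix ι κ K} (hM : Mᵀ * M = 0) :
    IsIsotropic (dotProductBilin K K) (LinearMap.range M.mulVecLin) := by
  rintro _ ⟨x, rfl⟩ _ ⟨y, rfl⟩
  rw [dotProductBilin_apply_apply, mulVecLin_apply, mulVecLin_apply, ← vecMul_transpose,
    ← dotProduct_mulVec, mulVec_mulVec, hM, zero_mulVec, dotProduct_zero]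

lemma rank_add_finrank_ker_mulVecLin (M : Matrix κ ι K) :
    M.rank + finrank K (LinearMap.ker M.mulVecLin) = Fintype.card ι := by
  rw [← finrank_fintype_fun_eq_card K, ← M.mulVecLin.finrank_range_add_finrank_ker, Matrix.rank]

lemma exists_mulVec_eq_zero_dotProduct_self_ne_zero [NeZero (2 : K)] {M : Matrix κ ι K}
    (hM : 2 * M.rank < Fintype.card ι) :
    ∃ v, M *ᵥ v = 0 ∧ v ⬝ᵥ v ≠ 0 := by
  by_contra! h
  have hker : IsIsotropic (dotProductBilin K K) (LinearMap.ker M.mulVecLin) :=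
    isIsotropic_of_apply_self_eq_zero isSymm_dotProductBilin h
  have hle := hker.two_mul_finrank_le nondegenerate_dotProductBilin
  have hrank := rank_add_finrank_ker_mulVecLin M
  rw [finrank_fintype_fun_eq_card] at hle
  omega

lemma even_rank_of_skew [NeZero (2 : K)] {M : Matrix ι ι K} (hM : Mᵀ = -M) : Even M.rank := by
  let B : LinearMap.BilinForm K (ι → K) := dotProductBilin K K ∘ₗ M.mulVecLin
  have hskew : ∀ x y, B x y = -B y x := fun x y => by
    simp only [B, LinearMap.comp_apply, dotProductBilin_apply_apply, mulVecLin_apply]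
    rw [← vecMul_transpose, ← dotProduct_mulVec, hM, neg_mulVec, dotProduct_neg, dotProduct_comm]
  have hker : LinearMap.ker B = LinearMap.ker M.mulVecLin :=
    LinearMap.ker_comp_of_ker_eq_bot _ nondegenerate_dotProductBilin.ker_eq_bot
  have hrank : finrank K (LinearMap.range B) = M.rank := by
    have h₁ := B.finrank_range_add_finrank_ker
    have h₂ := rank_add_finrank_ker_mulVecLin M
    rw [finrank_fintype_fun_eq_card, hker] at h₁
    omega
  exact hrank ▸ even_finrank_range_of_skew hskew

end DotProduct

section LagrangianFrame

variable {R ι κ : Type*} [CommRing R] [Fintype ι] [Fintype κ] [DecidableEq κ]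

/-- The columns of `U` and `V` are bases of two complementary Lagrangian subspaces for the dot
product, dual to each other. Complementarity is encoded by `card_eq`, counting dimensions. -/
structure IsLagrangianFrame (U V : Matrix ι κ R) : Prop where
  card_eq : Fintype.card ι = 2 * Fintype.card κ
  isotropic_left : Uᵀ * U = 0
  isotropic_right : Vᵀ * V = 0
  dual : Vᵀ * U = 1

variable {U V : Matrix ι κ R} {M A : Matrix ι ι R}

lemma det_fromBlocks_eq_one {a b c d : Matrix κ κ R} (ha : IsUnit a.det)
    (hac : aᵀ * c + cᵀ * a = 0) (hd : aᵀ * d + cᵀ * b = 1) : (fromBlocks a b c d).det = 1 := by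
  let _ := a.invertibleOfIsUnitDet ha
  have hschur : aᵀ * (d - c * ⅟a * b) = 1 := by
    rw [← hd, Matrix.mul_sub, ← Matrix.mul_assoc, ← Matrix.mul_assoc,
      eq_neg_of_add_eq_zero_left hac, Matrix.neg_mul, Matrix.mul_invOf_cancel_right,
      Matrix.neg_mul, sub_neg_eq_add]
  rw [det_fromBlocks₁₁, ← det_transpose a, ← det_mul, hschur, det_one]

namespace IsLagrangianFrame

lemma dual' (h : IsLagrangianFrame U V) : Uᵀ * V = 1 := by
  simpa using congrArg transpose h.dual

lemma fromRows_mul_fromCols (h : IsLagrangianFrame U V) :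
    fromRows Vᵀ Uᵀ * fromCols U V = 1 := by
  rw [Matrix.fromRows_mul_fromCols, h.dual, h.dual', h.isotropic_left, h.isotropic_right,
    fromBlocks_one]

lemma rank_mul_mul_transpose [StrongRankCondition R] (h : IsLagrangianFrame U V)
    (m : Matrix κ κ R) : (U * m * Uᵀ).rank = m.rank := by
  refine le_antisymm ((rank_mul_le_left _ _).trans (rank_mul_le_right _ _)) ?_
  calc m.rank
    _ = (Vᵀ * (U * m * Uᵀ) * V).rank := by
      rw [← Matrix.mul_assoc, ← Matrix.mul_assoc, h.dual, Matrix.one_mul, Matrix.mul_assoc, h.dual',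
        Matrix.mul_one]
    _ ≤ (U * m * Uᵀ).rank := (rank_mul_le_left _ _).trans (rank_mul_le_right _ _)

lemma fromCols_mul_fromRows [DecidableEq ι] (h : IsLagrangianFrame U V) :
    fromCols U V * fromRows Vᵀ Uᵀ = 1 :=
  (mul_eq_one_comm_of_card_eq _ _ _ (by rw [h.card_eq, Fintype.card_sum, two_mul])).1
    h.fromRows_mul_fromCols

lemma mul_transpose_add_mul_transpose [DecidableEq ι] (h : IsLagrangianFrame U V) :
    U * Vᵀ + V * Uᵀ = 1 := by
  rw [← Matrix.fromCols_mul_fromRows, h.fromCols_mul_fromRows]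

lemma eq_mul_mul_transpose (h : IsLagrangianFrame U V) (hUM : Uᵀ * M = 0) (hMU : M * U = 0) :
    U * (Vᵀ * M * V) * Uᵀ = M := by
  classical
  calc U * (Vᵀ * M * V) * Uᵀ
    _ = (U * Vᵀ + V * Uᵀ) * M * (U * Vᵀ + V * Uᵀ) := by
      simp only [Matrix.mul_add, Matrix.add_mul, Matrix.mul_assoc, hUM, ← Matrix.mul_assoc M U,
        hMU, Matrix.mul_zero, Matrix.zero_mul, add_zero, zero_add]
    _ = M := by rw [h.mul_transpose_add_mul_transpose, Matrix.one_mul, Matrix.mul_one]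

lemma det_eq_one_of_isUnit_det_block [DecidableEq ι] (h : IsLagrangianFrame U V)
    (hA : A ∈ orthogonalGroup ι R) (ha : IsUnit (Vᵀ * A * U).det) : A.det = 1 := by
  have hblock : ∀ X : Matrix ι κ R,
      (Vᵀ * A * U)ᵀ * (Uᵀ * A * X) + (Uᵀ * A * U)ᵀ * (Vᵀ * A * X) = Uᵀ * X := fun X =>
    calc (Vᵀ * A * U)ᵀ * (Uᵀ * A * X) + (Uᵀ * A * U)ᵀ * (Vᵀ * A * X)
      _ = Uᵀ * (Aᵀ * (U * Vᵀ + V * Uᵀ) * A) * X := by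
        simp only [transpose_mul, transpose_transpose, Matrix.mul_add, Matrix.add_mul,
          Matrix.mul_assoc]
        rw [add_comm]
      _ = Uᵀ * X := by
        rw [h.mul_transpose_add_mul_transpose, Matrix.mul_one, (mem_orthogonalGroup_iff' ι R).1 hA,
          Matrix.mul_one]
  calc A.det
    _ = (fromBlocks (Vᵀ * A * U) (Vᵀ * A * V) (Uᵀ * A * U) (Uᵀ * A * V)).det := by
      rw [← det_conj_of_mul_eq_one h.fromRows_mul_fromCols h.fromCols_mul_fromRows, fromRows_mul,
        Matrix.fromRows_mul_fromCols]
    _ = 1 := det_fromBlocks_eq_one ha ((hblock U).trans h.isotropic_left)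
      ((hblock V).trans h.dual')

lemma det_eq_one_of_isUnit_det_conj [DecidableEq ι] (h : IsLagrangianFrame U V)
    (hM : U * (Vᵀ * M * V) * Uᵀ = M) (hA : A ∈ orthogonalGroup ι R)
    (hAM : IsUnit (Vᵀ * (A * M * Aᵀ) * V).det) : A.det = 1 := by
  have hfactor : Vᵀ * (A * M * Aᵀ) * V = (Vᵀ * A * U) * ((Vᵀ * M * V) * (Vᵀ * A * U)ᵀ) := by
    conv_lhs => rw [← hM]
    simp only [transpose_mul, transpose_transpose, Matrix.mul_assoc]
  rw [hfactor, det_mul] at hAM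
  exact h.det_eq_one_of_isUnit_det_block hA (isUnit_of_mul_isUnit_left hAM)

end IsLagrangianFrame

lemma exists_isLagrangianFrame_of_dual [Invertible (2 : R)]
    (hcard : Fintype.card ι = 2 * Fintype.card κ) (hU : Uᵀ * U = 0) (hVU : Vᵀ * U = 1) :
    ∃ V', IsLagrangianFrame U V' := by
  -- Subtracting `½ U (Vᵀ V)` from `V` cancels the symmetric matrix `Vᵀ V`.
  have hUV : Uᵀ * V = 1 := by simpa using congrArg transpose hVU
  refine ⟨V - ⅟(2 : R) • (U * (Vᵀ * V)), hcard, hU, ?_, ?_⟩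
  · have hhalf : ⅟(2 : R) • (Vᵀ * V) + ⅟(2 : R) • (Vᵀ * V) = Vᵀ * V := by
      rw [← add_smul, invOf_two_add_invOf_two, one_smul]
    simp only [transpose_sub, transpose_smul, transpose_mul, transpose_transpose, Matrix.sub_mul,
      Matrix.mul_sub, Matrix.smul_mul, Matrix.mul_smul, Matrix.mul_assoc, hUV, Matrix.mul_one,
      ← Matrix.mul_assoc Uᵀ U, hU, Matrix.zero_mul, Matrix.mul_zero, smul_zero, sub_zero,
      ← Matrix.mul_assoc Vᵀ U, hVU, Matrix.one_mul]
    rw [sub_sub, hhalf, sub_self]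
  · rw [transpose_sub, Matrix.sub_mul, hVU, transpose_smul, transpose_mul, Matrix.smul_mul,
      Matrix.mul_assoc, hU, Matrix.mul_zero, smul_zero, sub_zero]

lemma IsIsotropic.exists_isLagrangianFrame {K : Type*} [Field K] [NeZero (2 : K)]
    {L : Submodule K (ι → K)} (hL : IsIsotropic (dotProductBilin K K) L)
    (hdim : finrank K L = Fintype.card κ) (hcard : Fintype.card ι = 2 * Fintype.card κ) :
    ∃ U V : Matrix ι κ K, IsLagrangianFrame U V ∧ ∀ j, U.col j ∈ L := by
  classical
  let _ : Invertible (2 : K) := invertibleOfNonzero two_ne_zero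
  let e : (κ → K) ≃ₗ[K] L := LinearEquiv.ofFinrankEq _ _ (by rw [finrank_fintype_fun_eq_card, hdim])
  let f : (κ → K) →ₗ[K] (ι → K) := L.subtype ∘ₗ e
  obtain ⟨g, hg⟩ := f.exists_leftInverse_of_injective
    (LinearMap.ker_eq_bot.2 (L.injective_subtype.comp e.injective))
  have hfL : ∀ j, (LinearMap.toMatrix' f).col j ∈ L := fun j => by
    have : (LinearMap.toMatrix' f).col j = e (Pi.single j 1) := by
      ext i; simp [f, LinearMap.toMatrix'_apply]
    exact this ▸ (e _).2
  obtain ⟨V, hV⟩ := exists_isLagrangianFrame_of_dual hcard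
    (hL.transpose_mul_eq_zero hfL hfL) (V := (LinearMap.toMatrix' g)ᵀ)
    (by rw [transpose_transpose, ← LinearMap.toMatrix'_comp, hg, LinearMap.toMatrix'_id])
  exact ⟨_, V, hV, hfL⟩

end LagrangianFrame

section SquareZeroSkew

variable {R ι κ : Type*} [CommRing R] [Fintype ι]

/-- The variety of skew matrices of square zero: the Higgs branch with flavour symmetry `SO(ι)`. -/
def squareZeroSkew (ι R : Type*) [Fintype ι] [CommRing R] : Set (Matrix ι ι R) :=
  {M | Mᵀ = -M ∧ M * M = 0}

/-- The stratum of `squareZeroSkew ι R` consisting of the matrices of rank `r`. -/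
def squareZeroSkewOfRank (ι R : Type*) [Fintype ι] [CommRing R] (r : ℕ) : Set (Matrix ι ι R) :=
  {M | Mᵀ = -M ∧ M * M = 0 ∧ M.rank = r}

variable {M A : Matrix ι ι R}

lemma isClosed_squareZeroSkew [TopologicalSpace R] [IsTopologicalRing R] [T2Space R] :
    IsClosed (squareZeroSkew ι R) :=
  (isClosed_eq (by fun_prop) (by fun_prop)).inter (isClosed_eq (by fun_prop) (by fun_prop))

lemma conj_mem_squareZeroSkewOfRank [DecidableEq ι] {r : ℕ}
    (hA : A ∈ orthogonalGroup ι R) (hM : M ∈ squareZeroSkewOfRank ι R r) :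
    A * M * Aᵀ ∈ squareZeroSkewOfRank ι R r := by
  obtain ⟨hskew, hsq, hrank⟩ := hM
  have hA' : Aᵀ * A = 1 := (mem_orthogonalGroup_iff' ι R).1 hA
  refine ⟨by simp [hskew, Matrix.mul_assoc], ?_, ?_⟩
  · calc A * M * Aᵀ * (A * M * Aᵀ)
      _ = A * M * (Aᵀ * A) * M * Aᵀ := by simp only [Matrix.mul_assoc]
      _ = A * (M * M) * Aᵀ := by rw [hA', Matrix.mul_one, Matrix.mul_assoc A]
      _ = 0 := by rw [hsq, Matrix.mul_zero, Matrix.zero_mul]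
  · rw [rank_mul_eq_left_of_isUnit_det _ _ (isUnit_det_of_left_inverse (B := A) ?_),
      rank_mul_eq_right_of_isUnit_det _ _ (isUnit_det_of_left_inverse hA'), hrank]
    exact (mem_orthogonalGroup_iff ι R).1 hA

variable [Fintype κ] [DecidableEq κ] {U V : Matrix ι κ R}

lemma IsLagrangianFrame.mul_mul_transpose_mem_squareZeroSkew (h : IsLagrangianFrame U V)
    {m : Matrix κ κ R} (hm : mᵀ = -m) : U * m * Uᵀ ∈ squareZeroSkew ι R := by
  refine ⟨by simp [hm, Matrix.mul_assoc], ?_⟩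
  calc U * m * Uᵀ * (U * m * Uᵀ)
    _ = U * m * (Uᵀ * U) * m * Uᵀ := by simp only [Matrix.mul_assoc]
    _ = 0 := by rw [h.isotropic_left, Matrix.mul_zero, Matrix.zero_mul, Matrix.zero_mul]

end SquareZeroSkew

section NormalForm

variable {K ι : Type*} (κ : Type*) [Field K] [Fintype ι] [Fintype κ] [DecidableEq κ]
  {M : Matrix ι ι K}

lemma exists_isLagrangianFrame_of_mem_squareZeroSkew [IsAlgClosed K] [NeZero (2 : K)]
    (hcard : Fintype.card ι = 2 * Fintype.card κ) (hM : M ∈ squareZeroSkew ι K) :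
    ∃ U V : Matrix ι κ K, IsLagrangianFrame U V ∧ U * (Vᵀ * M * V) * Uᵀ = M := by
  classical
  obtain ⟨hskew, hsq⟩ := hM
  obtain ⟨L, hML, hL, hdim⟩ := (isIsotropic_range_mulVecLin
    (by rw [hskew, Matrix.neg_mul, hsq, neg_zero])).exists_ge_finrank_eq_half
      isSymm_dotProductBilin nondegenerate_dotProductBilin
  obtain ⟨U, V, hUV, hU⟩ := hL.exists_isLagrangianFrame (κ := κ)
    (by rw [hdim, finrank_fintype_fun_eq_card, hcard, Nat.mul_div_cancel_left _ two_pos]) hcard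
  have hUM : Uᵀ * M = 0 := hL.transpose_mul_eq_zero hU fun j => hML ⟨Pi.single j 1, by simp⟩
  have hMU : M * U = 0 := by simpa [hskew] using congrArg transpose hUM
  exact ⟨U, V, hUV, hUV.eq_mul_mul_transpose hUM hMU⟩

variable {κ}

lemma rank_eq_card_iff_isUnit_det {m : Matrix κ κ K} :
    m.rank = Fintype.card κ ↔ IsUnit m.det := by
  rw [← isUnit_iff_isUnit_det, ← linearIndependent_cols_iff_isUnit,
    linearIndependent_iff_card_eq_finrank_span, rank_eq_finrank_span_cols, eq_comm]
  rfl

lemma exists_isLagrangianFrame_of_mem_squareZeroSkewOfRank [IsAlgClosed K] [NeZero (2 : K)]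
    (hcard : Fintype.card ι = 2 * Fintype.card κ)
    (hM : M ∈ squareZeroSkewOfRank ι K (Fintype.card κ)) :
    ∃ U V : Matrix ι κ K, IsLagrangianFrame U V ∧ U * (Vᵀ * M * V) * Uᵀ = M ∧
      IsUnit (Vᵀ * M * V).det := by
  obtain ⟨U, V, hUV, hUVM⟩ :=
    exists_isLagrangianFrame_of_mem_squareZeroSkew κ hcard ⟨hM.1, hM.2.1⟩
  refine ⟨U, V, hUV, hUVM, ?_⟩
  rw [← rank_eq_card_iff_isUnit_det, ← hUV.rank_mul_mul_transpose, hUVM, hM.2.2]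

end NormalForm

section Reflection

variable {K ι : Type*} [Field K] [Fintype ι] [DecidableEq ι] {v : ι → K}

/-- The matrix of the reflection in the hyperplane orthogonal to `v`; meaningful when
`v ⬝ᵥ v ≠ 0`. -/
def reflectionMatrix (v : ι → K) : Matrix ι ι K :=
  1 - (2 / (v ⬝ᵥ v)) • vecMulVec v v

lemma transpose_reflectionMatrix (v : ι → K) : (reflectionMatrix v)ᵀ = reflectionMatrix v := by
  rw [reflectionMatrix, transpose_sub, transpose_one, transpose_smul, transpose_vecMulVec]

lemma reflectionMatrix_mem_orthogonalGroup (hv : v ⬝ᵥ v ≠ 0) :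
    reflectionMatrix v ∈ orthogonalGroup ι K := by
  have hsq : vecMulVec v v * vecMulVec v v = (v ⬝ᵥ v) • vecMulVec v v := by
    rw [vecMulVec_mul_vecMulVec, vecMulVec_smul]
  rw [mem_orthogonalGroup_iff, transpose_reflectionMatrix]
  simp only [reflectionMatrix, Matrix.sub_mul, Matrix.mul_sub, Matrix.mul_one, Matrix.one_mul,
    Matrix.smul_mul, Matrix.mul_smul, hsq, smul_smul, div_mul_cancel₀ _ hv]
  module

lemma det_reflectionMatrix (hv : v ⬝ᵥ v ≠ 0) : (reflectionMatrix v).det = -1 := by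
  have : reflectionMatrix v = 1 + vecMulVec (-(2 / (v ⬝ᵥ v)) • v) v := by
    rw [reflectionMatrix, smul_vecMulVec, neg_smul, sub_eq_add_neg]
  rw [this, vecMulVec_eq Unit, det_one_add_replicateCol_mul_replicateRow, dotProduct_smul,
    smul_eq_mul, neg_mul, div_mul_cancel₀ _ hv]
  ring

lemma reflectionMatrix_conj_eq_self {M : Matrix ι ι K} (hM : Mᵀ = -M) (hMv : M *ᵥ v = 0) :
    reflectionMatrix v * M * (reflectionMatrix v)ᵀ = M := by
  have hvM : v ᵥ* M = 0 := by rw [← mulVec_transpose, hM, neg_mulVec, hMv, neg_zero]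
  rw [transpose_reflectionMatrix]
  simp [reflectionMatrix, Matrix.sub_mul, Matrix.mul_sub, vecMulVec_mul, mul_vecMulVec, hvM, hMv]

lemma exists_mem_orthogonalGroup_det_eq_neg_one (K ι : Type*) [Field K] [Fintype ι]
    [DecidableEq ι] [Nonempty ι] : ∃ A ∈ orthogonalGroup ι K, A.det = -1 := by
  have hv : (Pi.single (Classical.arbitrary ι) 1 : ι → K) ⬝ᵥ Pi.single (Classical.arbitrary ι) 1
      ≠ 0 := by simp
  exact ⟨_, reflectionMatrix_mem_orthogonalGroup hv, det_reflectionMatrix hv⟩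

end Reflection

section OrthogonalOrbit

variable {R ι : Type*} [CommRing R] [Fintype ι] [DecidableEq ι] {M N P : Matrix ι ι R} {d e : R}

/-- The orbit of `M` under conjugation by the orthogonal matrices of determinant `d`: the orbit
under the special orthogonal group for `d = 1`, its mirror image for `d = -1`. -/
def orthogonalOrbit (d : R) (M : Matrix ι ι R) : Set (Matrix ι ι R) :=
  {N | ∃ A ∈ orthogonalGroup ι R, A.det = d ∧ N = A * M * Aᵀ}

lemma soOrbit_eq_orthogonalOrbit {N : ℕ} (M : Matrix (Fin N) (Fin N) ℂ) :
    soOrbit M = orthogonalOrbit 1 M := by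
  ext X
  refine exists_congr fun A => ?_
  rw [mem_orthogonalGroup_iff']
  exact and_congr_right fun hA => by rw [inv_eq_left_inv hA]

lemma transpose_mem_orthogonalGroup {A : Matrix ι ι R} (hA : A ∈ orthogonalGroup ι R) :
    Aᵀ ∈ orthogonalGroup ι R :=
  (mem_orthogonalGroup_iff ι R).2 ((mem_orthogonalGroup_iff' ι R).1 hA)

lemma det_mul_self_of_mem_orthogonalGroup {A : Matrix ι ι R} (hA : A ∈ orthogonalGroup ι R) :
    A.det * A.det = 1 := by
  rw [← det_one (n := ι), ← (mem_orthogonalGroup_iff' ι R).1 hA, det_mul]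
  congr 1
  exact (det_transpose A).symm

lemma mem_orthogonalOrbit_self (M : Matrix ι ι R) : M ∈ orthogonalOrbit 1 M :=
  ⟨1, one_mem _, det_one, by simp⟩

lemma mem_orthogonalOrbit_symm (h : N ∈ orthogonalOrbit d M) : M ∈ orthogonalOrbit d N := by
  obtain ⟨A, hA, hd, rfl⟩ := h
  have hA' : Aᵀ * A = 1 := (mem_orthogonalGroup_iff' ι R).1 hA
  refine ⟨Aᵀ, transpose_mem_orthogonalGroup hA, (det_transpose A).trans hd, ?_⟩
  calc M
    _ = (Aᵀ * A) * M * (Aᵀ * A) := by rw [hA', Matrix.one_mul, Matrix.mul_one]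
    _ = Aᵀ * (A * M * Aᵀ) * Aᵀᵀ := by simp only [transpose_transpose, Matrix.mul_assoc]

lemma mem_orthogonalOrbit_trans (hN : N ∈ orthogonalOrbit d M) (hP : P ∈ orthogonalOrbit e N) :
    P ∈ orthogonalOrbit (e * d) M := by
  obtain ⟨A, hA, rfl, rfl⟩ := hN
  obtain ⟨B, hB, rfl, rfl⟩ := hP
  exact ⟨B * A, mul_mem hB hA, det_mul B A, by simp only [transpose_mul, Matrix.mul_assoc]⟩

lemma orthogonalOrbit_eq_of_mem (h : N ∈ orthogonalOrbit d M) (e : R) :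
    orthogonalOrbit e N = orthogonalOrbit (e * d) M := by
  have hdd : d * d = 1 := by
    obtain ⟨A, hA, rfl, -⟩ := h
    exact det_mul_self_of_mem_orthogonalGroup hA
  refine Set.Subset.antisymm (fun P hP => mem_orthogonalOrbit_trans h hP) fun P hP => ?_
  have := mem_orthogonalOrbit_trans (mem_orthogonalOrbit_symm h) hP
  rwa [mul_assoc, hdd, mul_one] at this

end OrthogonalOrbit

section Density

variable {K κ : Type*} [Field K] [Fintype κ] [DecidableEq κ]

lemma exists_skew_isUnit_det {R : Type*} [CommRing R] (hκ : Even (Fintype.card κ)) :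
    ∃ w : Matrix κ κ R, wᵀ = -w ∧ IsUnit w.det := by
  obtain ⟨k, hk⟩ := hκ
  let e : κ ≃ Fin k ⊕ Fin k := Fintype.equivOfCardEq (by simp [hk])
  refine ⟨(Matrix.J (Fin k) R).submatrix e e, ?_, ?_⟩
  · rw [transpose_submatrix, Matrix.J_transpose]; rfl
  · rw [det_submatrix_equiv_self]
    exact Matrix.isUnit_det_J (Fin k) R

lemma finite_setOf_det_smul_add_eq_zero {w : Matrix κ κ K} (hw : IsUnit w.det) (m : Matrix κ κ K) :
    {t : K | (t • w + m).det = 0}.Finite := by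
  let p : Polynomial K :=
    ((Polynomial.X : Polynomial K) • w.map Polynomial.C + m.map Polynomial.C).det
  have hp : p ≠ 0 := fun hp₀ => hw.ne_zero <| by
    rw [← Polynomial.coeff_det_X_add_C_card w m]
    exact congrArg (Polynomial.coeff · (Fintype.card κ)) hp₀
  have heval : ∀ t, p.eval t = (t • w + m).det := fun t => by
    rw [← Polynomial.coe_evalRingHom, RingHom.map_det]
    congr 1
    ext i j
    simp [mul_comm t]
  refine (p.rootSet_finite K).subset fun t ht => (Polynomial.mem_rootSet_of_ne hp).2 ?_
  rwa [Polynomial.coe_aeval_eq_eval, heval]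

variable [TopologicalSpace K] [T2Space K] [(𝓝[≠] (0 : K)).NeBot]

lemma zero_mem_closure_setOf_isUnit_det {w : Matrix κ κ K} (hw : IsUnit w.det)
    (m : Matrix κ κ K) : 0 ∈ closure {t : K | IsUnit (t • w + m).det} := by
  have hne : ∀ᶠ t in 𝓝[≠] (0 : K), IsUnit (t • w + m).det := by
    filter_upwards [nhdsNE_of_nhdsNE_sdiff_finite Filter.univ_mem
      (finite_setOf_det_smul_add_eq_zero hw m)] with t ht
    exact isUnit_iff_ne_zero.2 ht.2
  exact mem_closure_iff_frequently.2 (hne.frequently.filter_mono nhdsWithin_le_nhds)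

theorem closure_squareZeroSkewOfRank {ι : Type*} [Fintype ι]
    [IsTopologicalRing K] [IsAlgClosed K] [NeZero (2 : K)] {m : ℕ} (hm : Even m)
    (hcard : Fintype.card ι = 2 * m) :
    closure (squareZeroSkewOfRank ι K m) = squareZeroSkew ι K := by
  refine Set.Subset.antisymm
    (closure_minimal (fun M hM => ⟨hM.1, hM.2.1⟩) isClosed_squareZeroSkew) fun M hM => ?_
  obtain ⟨U, V, hUV, hUVM⟩ := exists_isLagrangianFrame_of_mem_squareZeroSkew (Fin m)
    (by rw [hcard, Fintype.card_fin]) hM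
  obtain ⟨w, hw, hwdet⟩ := exists_skew_isUnit_det (R := K) (κ := Fin m) (by rwa [Fintype.card_fin])
  have hskew : (Vᵀ * M * V)ᵀ = -(Vᵀ * M * V) := by simp [hM.1, Matrix.mul_assoc]
  have hmaps : ∀ t ∈ {t : K | IsUnit (t • w + Vᵀ * M * V).det},
      U * (t • w + Vᵀ * M * V) * Uᵀ ∈ squareZeroSkewOfRank ι K m := fun t ht => by
    obtain ⟨hskew', hsq⟩ := hUV.mul_mul_transpose_mem_squareZeroSkew (m := t • w + Vᵀ * M * V)
      (by rw [transpose_add, transpose_smul, hw, hskew, smul_neg, neg_add])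
    refine ⟨hskew', hsq, ?_⟩
    rw [hUV.rank_mul_mul_transpose, rank_eq_card_iff_isUnit_det.2 ht, Fintype.card_fin]
  have hcont : Continuous fun t : K => U * (t • w + Vᵀ * M * V) * Uᵀ := by fun_prop
  have := map_mem_closure hcont (zero_mem_closure_setOf_isUnit_det hwdet (Vᵀ * M * V)) hmaps
  rwa [zero_smul, zero_add, hUVM] at this

end Density

section ClosuresOfOrbits

variable {K ι : Type*} [Field K] [TopologicalSpace K] [IsTopologicalRing K]
  [Fintype ι] [DecidableEq ι] {M X : Matrix ι ι K} {m : ℕ} [NeZero (2 : K)]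

lemma mem_closure_orthogonalOrbit_neg {d : K} (hX : Xᵀ = -X) (hrank : 2 * X.rank < Fintype.card ι)
    (h : X ∈ closure (orthogonalOrbit d M)) : X ∈ closure (orthogonalOrbit (-d) M) := by
  obtain ⟨v, hXv, hv⟩ := exists_mulVec_eq_zero_dotProduct_self_ne_zero hrank
  have hcont : Continuous fun Y => reflectionMatrix v * Y * (reflectionMatrix v)ᵀ := by fun_prop
  have hmaps : Set.MapsTo (fun Y => reflectionMatrix v * Y * (reflectionMatrix v)ᵀ)
      (orthogonalOrbit d M) (orthogonalOrbit (-d) M) := fun Y hY => by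
    rw [← neg_one_mul d]
    exact mem_orthogonalOrbit_trans hY
      ⟨_, reflectionMatrix_mem_orthogonalGroup hv, det_reflectionMatrix hv, rfl⟩
  have := map_mem_closure hcont h hmaps
  rwa [reflectionMatrix_conj_eq_self hX hXv] at this

variable [T2Space K] [IsAlgClosed K]

lemma notMem_closure_orthogonalOrbit_neg_one (hcard : Fintype.card ι = 2 * m)
    (hM : M ∈ squareZeroSkewOfRank ι K m) : M ∉ closure (orthogonalOrbit (-1) M) := by
  intro hcl
  obtain ⟨U, V, hUV, hUVM, hdet⟩ := exists_isLagrangianFrame_of_mem_squareZeroSkewOfRank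
    (κ := Fin m) (by rw [hcard, Fintype.card_fin]) (by rwa [Fintype.card_fin])
  have hopen : IsOpen {N : Matrix ι ι K | (Vᵀ * N * V).det ≠ 0} :=
    isOpen_ne_fun (by fun_prop) continuous_const
  obtain ⟨_, hN, A, hA, hAdet, rfl⟩ := mem_closure_iff.1 hcl _ hopen hdet.ne_zero
  have hAdet' := hUV.det_eq_one_of_isUnit_det_conj hUVM hA (isUnit_iff_ne_zero.2 hN)
  have htwo : (2 : K) = 0 := by linear_combination hAdet - hAdet'
  exact two_ne_zero htwo

lemma eq_orthogonalOrbit_neg_one [Nonempty ι] (hcard : Fintype.card ι = 2 * m)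
    {O₂ : Set (Matrix ι ι K)} (hO₂ : ∃ M₂, O₂ = orthogonalOrbit 1 M₂)
    (hunion : orthogonalOrbit 1 M ∪ O₂ = squareZeroSkewOfRank ι K m) :
    O₂ = orthogonalOrbit (-1) M := by
  obtain ⟨A, hA, hAdet⟩ := exists_mem_orthogonalGroup_det_eq_neg_one K ι
  have hM : M ∈ squareZeroSkewOfRank ι K m := hunion ▸ Or.inl (mem_orthogonalOrbit_self M)
  have hN : A * M * Aᵀ ∈ orthogonalOrbit (-1) M := ⟨A, hA, hAdet, rfl⟩
  have hNS := conj_mem_squareZeroSkewOfRank hA hM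
  have hN₁ : A * M * Aᵀ ∉ orthogonalOrbit 1 M := fun hN₁ => by
    refine notMem_closure_orthogonalOrbit_neg_one hcard hNS (subset_closure ?_)
    rwa [orthogonalOrbit_eq_of_mem hN₁, mul_one]
  obtain ⟨M₂, rfl⟩ := hO₂
  have hN₂ : A * M * Aᵀ ∈ orthogonalOrbit 1 M₂ :=
    (hunion.symm ▸ hNS : _ ∈ orthogonalOrbit 1 M ∪ _).resolve_left hN₁
  have h₁ := orthogonalOrbit_eq_of_mem hN₂ 1
  have h₂ := orthogonalOrbit_eq_of_mem hN 1
  rw [one_mul] at h₁ h₂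
  rw [← h₁, h₂]

lemma notMem_squareZeroSkewOfRank_of_mem_closure (hcard : Fintype.card ι = 2 * m)
    (hunion : orthogonalOrbit 1 M ∪ orthogonalOrbit (-1) M = squareZeroSkewOfRank ι K m)
    (h₁ : X ∈ closure (orthogonalOrbit 1 M)) (h₂ : X ∈ closure (orthogonalOrbit (-1) M)) :
    X ∉ squareZeroSkewOfRank ι K m := by
  intro hX
  have hcl := notMem_closure_orthogonalOrbit_neg_one hcard hX
  rcases hunion.symm ▸ hX with h | h <;> rw [orthogonalOrbit_eq_of_mem h] at hcl
  · exact hcl (by rwa [mul_one])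
  · exact hcl (by rwa [neg_one_mul, neg_neg])

variable [(𝓝[≠] (0 : K)).NeBot]

theorem closure_orthogonalOrbit_union (hcard : Fintype.card ι = 2 * m)
    (hunion : orthogonalOrbit 1 M ∪ orthogonalOrbit (-1) M = squareZeroSkewOfRank ι K m) :
    closure (orthogonalOrbit 1 M) ∪ closure (orthogonalOrbit (-1) M) = squareZeroSkew ι K := by
  have hM : M ∈ squareZeroSkewOfRank ι K m := hunion ▸ Or.inl (mem_orthogonalOrbit_self M)
  have hm : Even m := hM.2.2 ▸ even_rank_of_skew hM.1
  rw [← closure_union, hunion, closure_squareZeroSkewOfRank hm hcard]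

theorem closure_orthogonalOrbit_inter (hm : m ≠ 0)
    (hcard : Fintype.card ι = 2 * m)
    (hunion : orthogonalOrbit 1 M ∪ orthogonalOrbit (-1) M = squareZeroSkewOfRank ι K m) :
    closure (orthogonalOrbit 1 M) ∩ closure (orthogonalOrbit (-1) M) =
      {X | Xᵀ = -X ∧ X * X = 0 ∧ X.rank ≤ m - 2} := by
  have hM : M ∈ squareZeroSkewOfRank ι K m := hunion ▸ Or.inl (mem_orthogonalOrbit_self M)
  have hcl := closure_orthogonalOrbit_union hcard hunion
  refine Set.Subset.antisymm (fun X ⟨h₁, h₂⟩ => ?_) fun X ⟨hskew, hsq, hrank⟩ => ?_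
  · obtain ⟨hskew, hsq⟩ : X ∈ squareZeroSkew ι K := hcl ▸ Or.inl h₁
    have hle := rank_add_rank_le_card_of_mul_eq_zero hsq
    have hne : X.rank ≠ m := fun hX =>
      notMem_squareZeroSkewOfRank_of_mem_closure hcard hunion h₁ h₂ ⟨hskew, hsq, hX⟩
    obtain ⟨k, hk⟩ : Even m := hM.2.2 ▸ even_rank_of_skew hM.1
    obtain ⟨r, hr⟩ := even_rank_of_skew hskew
    exact ⟨hskew, hsq, by omega⟩
  · have hswap : ∀ d, X ∈ closure (orthogonalOrbit d M) → X ∈ closure (orthogonalOrbit (-d) M) :=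
      fun d => mem_closure_orthogonalOrbit_neg hskew (by omega)
    have hX : X ∈ squareZeroSkew ι K := ⟨hskew, hsq⟩
    rcases hcl.symm ▸ hX with h | h
    · exact ⟨h, hswap 1 h⟩
    · exact ⟨neg_neg (1 : K) ▸ hswap (-1) h, h⟩

end ClosuresOfOrbits

theorem two_cones_union_and_intersection_general {K ι : Type*} [Field K] [IsAlgClosed K]
    [NeZero (2 : K)] [TopologicalSpace K] [IsTopologicalRing K] [T2Space K]
    [(𝓝[≠] (0 : K)).NeBot] [Fintype ι] [DecidableEq ι] {m : ℕ} (hm : m ≠ 0)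
    (hcard : Fintype.card ι = 2 * m) {O₁ O₂ : Set (Matrix ι ι K)}
    (hO₁ : ∃ M₀, O₁ = orthogonalOrbit 1 M₀) (hO₂ : ∃ M₀, O₂ = orthogonalOrbit 1 M₀)
    (hunion : O₁ ∪ O₂ = squareZeroSkewOfRank ι K m) :
    closure O₁ ∪ closure O₂ = squareZeroSkew ι K ∧
    closure O₁ ∩ closure O₂ = {M | Mᵀ = -M ∧ M * M = 0 ∧ M.rank ≤ m - 2} := by
  have : Nonempty ι := Fintype.card_pos_iff.1 (by omega)
  obtain ⟨M, rfl⟩ := hO₁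
  obtain rfl := eq_orthogonalOrbit_neg_one hcard hO₂ hunion
  exact ⟨closure_orthogonalOrbit_union hcard hunion, closure_orthogonalOrbit_inter hm hcard hunion⟩

/-- The Higgs branch of Sp(n) with 2n flavours is the union of the closures of the two
SO(4n, ℂ)-orbits O₁, O₂ of maximal-rank square-zero antisymmetric matrices, and the
intersection of the two closures is the set of square-zero antisymmetric matrices of rank
at most 2n − 2 (the Higgs branch of Sp(n−1) with the same flavour symmetry). -/
theorem two_cones_union_and_intersection (n : ℕ) (hn : 1 ≤ n)
    (O₁ O₂ : Set (Matrix (Fin (4 * n)) (Fin (4 * n)) ℂ))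
    (hO₁ : ∃ M₀ ∈ O₁, O₁ = soOrbit M₀)
    (hO₂ : ∃ M₀ ∈ O₂, O₂ = soOrbit M₀)
    (hdisj : O₁ ∩ O₂ = ∅)
    (hunion : O₁ ∪ O₂ = {M : Matrix (Fin (4 * n)) (Fin (4 * n)) ℂ |
        Mᵀ = -M ∧ M * M = 0 ∧ M.rank = 2 * n}) :
    closure O₁ ∪ closure O₂ =
      {M : Matrix (Fin (4 * n)) (Fin (4 * n)) ℂ | Mᵀ = -M ∧ M * M = 0} ∧
    closure O₁ ∩ closure O₂ =
      {M : Matrix (Fin (4 * n)) (Fin (4 * n)) ℂ |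
        Mᵀ = -M ∧ M * M = 0 ∧ M.rank ≤ 2 * n - 2} := by
  obtain ⟨M₁, -, rfl⟩ := hO₁
  obtain ⟨M₂, -, rfl⟩ := hO₂
  rw [soOrbit_eq_orthogonalOrbit, soOrbit_eq_orthogonalOrbit] at hunion ⊢
  exact two_cones_union_and_intersection_general (by omega) (by rw [Fintype.card_fin]; ring)
    ⟨M₁, rfl⟩ ⟨M₂, rfl⟩ hunion
end
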